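/- Assume (H) and that all zeros of A are simple, i.e., A′(t) ≠ 0 whenever A(t) = 0. Then the equation (N) has exactly one C¹, T-periodic solution with nonconstant sign. -/

import Mathlib

/-!
Time reversal `x(t) ↦ -x(-t)` preserves (N) and interchanges positive and negative parts, and
`x ↦ -x` replaces `B` by `-B`; so let `B > 0`. Condition (H) provides a slope `m > 0` such that the
lines of slope `m` through the zeros of `A` are barriers for solutions. Hence a periodic solution
with a zero vanishes at every zero of `A`; it is then positive where `A < 0` and negative where
`A > 0`, since a sign violation would have to start at a zero of `A` and
`(x²)' = 2 (A + B x + C x²)` excludes this by a Gronwall estimate. So the square of its negative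
part solves `w' = 2 (A⁺ - B √w + C w)` with `w = 0` at the zeros of `A`. As `-B √w` is decreasing in
`w`, there is only one such `w`, and uniqueness follows.

Conversely, `w` is found by Peano's theorem between the barriers `0` and `(m (q - t))²`, where `q`
is a zero of `A`, and `x = √w₂(-·) - √w₁` is built from the solutions for the reversed and the
original coefficients. Where `A` changes sign, `√w` has a one-sided slope which is a root of
`r² - B r - A' = 0`: to the right of a zero with `A' > 0` this follows from comparison with
parabolas. To the left of a zero `q` with `A' < 0` both roots are positive; the barrier keeps
`√w / (q - t)` below the larger one, and the equation then drives it to the smaller one.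
These slopes match, which makes `x` continuously differentiable.
-/

open Set Filter Topology

namespace AbelEquation

section Peano

variable {E : Type*} [NormedAddCommGroup E] [NormedSpace ℝ E] {f : ℝ → E → E} {L : NNReal}

/-- The integral operator of the initial value problem `u' = f(t, u)`, `u a = x₀`, with a time
delay `h`; its fixed points are Tonelli's approximate solutions. -/
noncomputable def delayedPicard (f : ℝ → E → E) (x₀ : E) (a h : ℝ) (w : ℝ → E) (t : ℝ) : E :=
  x₀ + ∫ s in a..t, f s (w (max a (s - h)))

lemma delayedPicard_self (x₀ : E) (a h : ℝ) (w : ℝ → E) : delayedPicard f x₀ a h w a = x₀ := by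
  simp [delayedPicard]

lemma lipschitzWith_delayedPicard (hf : Continuous (Function.uncurry f))
    (hL : ∀ t y, ‖f t y‖ ≤ L) (x₀ : E) (a h : ℝ) {w : ℝ → E} (hw : Continuous w) :
    LipschitzWith L (delayedPicard f x₀ a h w) := by
  have hcont : Continuous fun s => f s (w (max a (s - h))) :=
    hf.comp (continuous_id.prodMk (by fun_prop))
  refine LipschitzWith.of_dist_le_mul fun t s => ?_
  rw [dist_eq_norm, delayedPicard, delayedPicard, add_sub_add_left_eq_sub,
    intervalIntegral.integral_interval_sub_left (hcont.intervalIntegrable _ _)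
      (hcont.intervalIntegrable _ _), Real.dist_eq]
  exact intervalIntegral.norm_integral_le_of_norm_le_const fun _ _ => hL _ _

lemma continuous_iterate_delayedPicard (hf : Continuous (Function.uncurry f))
    (hL : ∀ t y, ‖f t y‖ ≤ L) (x₀ : E) (a h : ℝ) (k : ℕ) :
    Continuous ((delayedPicard f x₀ a h)^[k] fun _ => x₀) := by
  induction k with
  | zero => exact continuous_const
  | succ k ih =>
    rw [Function.iterate_succ_apply']
    exact (lipschitzWith_delayedPicard hf hL x₀ a h ih).continuous

lemma delayedPicard_iterate_eqOn (f : ℝ → E → E) (x₀ : E) (a : ℝ) {h : ℝ} (hh : 0 ≤ h) (k : ℕ) :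
    EqOn (delayedPicard f x₀ a h ((delayedPicard f x₀ a h)^[k] fun _ => x₀))
      ((delayedPicard f x₀ a h)^[k] fun _ => x₀) (Icc a (a + k * h)) := by
  induction k with
  | zero =>
    intro t ht
    obtain rfl : t = a := le_antisymm (by simpa using ht.2) ht.1
    exact delayedPicard_self (f := f) x₀ t h _
  | succ k ih =>
    intro t ht
    rw [Function.iterate_succ_apply']
    refine congrArg (x₀ + ·) ?_
    refine intervalIntegral.integral_congr fun s hs => congrArg (f s) (ih ⟨le_max_left _ _, ?_⟩)
    rw [uIcc_of_le ht.1] at hs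
    have hsk := hs.2.trans ht.2
    push_cast at hsk
    exact max_le (le_add_of_nonneg_right (by positivity)) (by linarith)

lemma exists_eqOn_delayedPicard (hf : Continuous (Function.uncurry f)) (hL : ∀ t y, ‖f t y‖ ≤ L)
    (x₀ : E) (a b : ℝ) {h : ℝ} (hh : 0 < h) :
    ∃ u : ℝ → E, LipschitzWith L u ∧ EqOn (delayedPicard f x₀ a h u) u (Icc a b) := by
  obtain ⟨k, hk⟩ := exists_nat_ge ((b - a) / h)
  have hbk : b ≤ a + (k + 1 : ℕ) * h := by
    rw [div_le_iff₀ hh] at hk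
    push_cast
    linarith
  refine ⟨(delayedPicard f x₀ a h)^[k + 1] fun _ => x₀, ?_, fun t ht => ?_⟩
  · rw [Function.iterate_succ_apply']
    exact lipschitzWith_delayedPicard hf hL x₀ a h
      (continuous_iterate_delayedPicard hf hL x₀ a h k)
  · exact delayedPicard_iterate_eqOn f x₀ a hh.le (k + 1) ⟨ht.1, ht.2.trans hbk⟩

lemma exists_tendsto_subseq_of_lipschitzWith {α β : Type*} [PseudoMetricSpace α] [CompactSpace α]
    [MetricSpace β] {K : NNReal} {s : Set β} (hs : IsCompact s) {u : ℕ → α → β}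
    (hu : ∀ n, LipschitzWith K (u n)) (hus : ∀ n x, u n x ∈ s) :
    ∃ v : α → β, Continuous v ∧ ∃ φ : ℕ → ℕ, StrictMono φ ∧
      ∀ x, Tendsto (fun n => u (φ n) x) atTop (𝓝 (v x)) := by
  let F : ℕ → BoundedContinuousFunction α β := fun n =>
    BoundedContinuousFunction.mkOfCompact ⟨u n, (hu n).continuous⟩
  have hcompact : IsCompact (closure (range F)) := by
    refine BoundedContinuousFunction.arzela_ascoli s hs _ ?_ ?_
    · rintro _ x ⟨n, rfl⟩
      exact hus n x
    · refine (LipschitzWith.uniformEquicontinuous _ K ?_).equicontinuous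
      rintro ⟨_, n, rfl⟩
      exact hu n
  obtain ⟨v, -, φ, hφ, hlim⟩ :=
    hcompact.tendsto_subseq fun n => subset_closure (mem_range_self (f := F) n)
  exact ⟨v, v.continuous, φ, hφ, fun x =>
    (BoundedContinuousFunction.tendsto_iff_tendstoUniformly.1 hlim).tendsto_at x⟩

lemma tendsto_integral_delayed (hf : Continuous (Function.uncurry f)) (hL : ∀ t y, ‖f t y‖ ≤ L)
    {u : ℕ → ℝ → E} (hu : ∀ n, LipschitzWith L (u n)) {v : ℝ → E} {h : ℕ → ℝ}
    (hh : Tendsto h atTop (𝓝 0)) {a t : ℝ} (hat : a ≤ t)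
    (huv : ∀ s ∈ Icc a t, Tendsto (fun n => u n s) atTop (𝓝 (v s))) :
    Tendsto (fun n => ∫ s in a..t, f s (u n (max a (s - h n)))) atTop
      (𝓝 (∫ s in a..t, f s (v s))) := by
  refine intervalIntegral.tendsto_integral_filter_of_dominated_convergence (fun _ => (L : ℝ))
    (.of_forall fun n => ?_) (.of_forall fun n => .of_forall fun s _ => hL _ _)
    intervalIntegrable_const (.of_forall fun s hs => ?_)
  · have := (hu n).continuous
    exact (hf.comp (continuous_id.prodMk (by fun_prop : Continuous fun s =>
      u n (max a (s - h n))))).aestronglyMeasurable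
  · rw [uIoc_of_le hat] at hs
    have hdelay : Tendsto (fun n => max a (s - h n)) atTop (𝓝 s) := by
      simpa [max_eq_right hs.1.le] using
        (tendsto_const_nhds (x := a)).max ((tendsto_const_nhds (x := s)).sub hh)
    have hdist : Tendsto (fun n => dist (u n s) (u n (max a (s - h n)))) atTop (𝓝 0) := by
      refine squeeze_zero (fun _ => dist_nonneg) (fun n => (hu n).dist_le_mul _ _) ?_
      simpa using ((tendsto_const_nhds (x := s)).dist hdelay).const_mul (L : ℝ)
    have hlim := (huv s (Ioc_subset_Icc_self hs)).congr_dist hdist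
    exact ((hf.tendsto (s, v s)).comp (tendsto_const_nhds.prodMk_nhds hlim) :)

/-- **Peano's existence theorem** for a bounded continuous vector field. -/
theorem exists_hasDerivAt_of_continuous [ProperSpace E] (hf : Continuous (Function.uncurry f))
    (hL : ∀ t y, ‖f t y‖ ≤ L) (x₀ : E) {a b : ℝ} (hab : a ≤ b) :
    ∃ u : ℝ → E, u a = x₀ ∧ ∀ t ∈ Icc a b, HasDerivAt u (f t (u t)) t := by
  choose u hu hfix using fun n : ℕ =>
    exists_eqOn_delayedPicard hf hL x₀ a b (Nat.one_div_pos_of_nat (α := ℝ) (n := n))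
  have hball (n : ℕ) (t : Icc a b) : u n t ∈ Metric.closedBall x₀ (L * (b - a)) := by
    have hinit : u n a = x₀ := by
      rw [← hfix n (left_mem_Icc.2 hab), delayedPicard_self]
    rw [Metric.mem_closedBall]
    refine (hinit ▸ (hu n).dist_le_mul t a).trans ?_
    rw [Real.dist_eq, abs_of_nonneg (sub_nonneg.2 t.2.1)]
    gcongr
    exact t.2.2
  obtain ⟨v, hv, φ, hφ, hlim⟩ := exists_tendsto_subseq_of_lipschitzWith
    (isCompact_closedBall x₀ _) (fun n => (hu n).lipschitzOnWith.to_restrict) hball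
  have hlim_extend : ∀ s ∈ Icc a b,
      Tendsto (fun n => u (φ n) s) atTop (𝓝 (IccExtend hab v s)) := fun s hs => by
    simpa [IccExtend_of_mem hab v hs] using hlim ⟨s, hs⟩
  have hlimit_eq : ∀ t ∈ Icc a b,
      x₀ + ∫ s in a..t, f s (IccExtend hab v s) = IccExtend hab v t := fun t ht => by
    refine tendsto_nhds_unique ?_ (hlim_extend t ht)
    have h_integral := tendsto_integral_delayed hf hL (fun n => hu (φ n))
      ((tendsto_one_div_add_atTop_nhds_zero_nat (𝕜 := ℝ)).comp hφ.tendsto_atTop) ht.1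
      fun s hs => hlim_extend s ⟨hs.1, hs.2.trans ht.2⟩
    exact (h_integral.const_add x₀).congr fun n => hfix (φ n) ht
  have hcont : Continuous fun s => f s (IccExtend hab v s) :=
    hf.comp (continuous_id.prodMk (hv.Icc_extend' (h := hab)))
  refine ⟨fun t => x₀ + ∫ s in a..t, f s (IccExtend hab v s), by simp, fun t ht => ?_⟩
  beta_reduce
  rw [hlimit_eq t ht]
  exact (hcont.integral_hasStrictDerivAt a t).hasDerivAt.const_add x₀

end Peano

section Comparison

variable {f g g' A : ℝ → ℝ} {a b K : ℝ}

lemma nonpos_of_deriv_right_le_mul (hg : ContinuousOn g (Icc a b))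
    (hg' : ∀ t ∈ Ico a b, HasDerivWithinAt g (g' t) (Ici t) t) (ha : g a ≤ 0)
    (hK : ∀ t ∈ Ico a b, 0 < g t → g' t ≤ K * g t) {t : ℝ} (ht : t ∈ Icc a b) : g t ≤ 0 := by
  have hbarrier (ε : ℝ) (hε : 0 < ε) : g t ≤ ε * Real.exp ((K + 1) * (t - a)) := by
    have hexp (s : ℝ) : HasDerivAt (fun s => ε * Real.exp ((K + 1) * (s - a)))
        (ε * (Real.exp ((K + 1) * (s - a)) * ((K + 1) * 1))) s :=
      (((hasDerivAt_id s).sub_const a).const_mul (K + 1)).exp.const_mul ε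
    refine image_le_of_deriv_right_lt_deriv_boundary hg hg' (by simpa using ha.trans hε.le) hexp
      (fun s hs hgs => ?_) ht
    have hpos : 0 < g s := hgs ▸ by positivity
    have hgrowth := hK s hs hpos
    rw [hgs] at hgrowth hpos
    linarith
  have hlim : Tendsto (fun ε : ℝ => ε * Real.exp ((K + 1) * (t - a))) (𝓝[>] 0) (𝓝 0) := by
    simpa using ((tendsto_id (x := 𝓝 (0 : ℝ))).mul_const
      (Real.exp ((K + 1) * (t - a)))).mono_left nhdsWithin_le_nhds
  exact ge_of_tendsto hlim (eventually_mem_nhdsWithin.mono hbarrier)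

lemma nonpos_of_deriv_le_mul (hg : ∀ t ∈ Icc a b, HasDerivAt g (g' t) t) (ha : g a ≤ 0)
    (hK : ∀ t ∈ Ico a b, 0 < g t → g' t ≤ K * g t) {t : ℝ} (ht : t ∈ Icc a b) : g t ≤ 0 :=
  nonpos_of_deriv_right_le_mul (fun s hs => (hg s hs).continuousAt.continuousWithinAt)
    (fun s hs => (hg s (Ico_subset_Icc_self hs)).hasDerivWithinAt) ha hK ht

lemma exists_last_zero (hf : Continuous f) (hab : a ≤ b) (ha : 0 ≤ f a) (hb : f b < 0) :
    ∃ p ∈ Ico a b, f p = 0 ∧ ∀ s ∈ Ioc p b, f s < 0 := by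
  obtain ⟨p, ⟨hp, hfp⟩, hmax⟩ := (isCompact_Icc.inter_right
    (isClosed_le continuous_const hf)).exists_isGreatest ⟨a, left_mem_Icc.2 hab, ha⟩
  have hneg : ∀ s ∈ Ioc p b, f s < 0 := fun s hs => by
    by_contra! hs0
    exact (hmax ⟨⟨hp.1.trans hs.1.le, hs.2⟩, hs0⟩).not_gt hs.1
  have hpb : p < b := hp.2.lt_of_ne fun h => hb.not_ge (h ▸ hfp)
  refine ⟨p, ⟨hp.1, hpb⟩, le_antisymm ?_ hfp, hneg⟩
  exact le_of_tendsto (hf.continuousWithinAt (s := Ioi p)).tendsto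
    (mem_of_superset (Ioc_mem_nhdsGT hpb) fun s hs => (hneg s hs).le)

lemma nonpos_of_neg_of_deriv_le_mul (hA : Continuous A) (hg : ∀ t, HasDerivAt g (g' t) t)
    (hzero : ∀ t, A t = 0 → g t = 0) (hK : ∀ t, A t ≤ 0 → 0 < g t → g' t ≤ K * g t) {z t : ℝ}
    (hz : A z = 0) (hzt : z ≤ t) (ht : A t < 0) : g t ≤ 0 := by
  obtain ⟨p, hp, hAp, hneg⟩ := exists_last_zero hA hzt hz.ge ht
  refine nonpos_of_deriv_le_mul (fun s _ => hg s) (hzero p hAp).le (fun s hs => hK s ?_)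
    (right_mem_Icc.2 hp.2.le)
  rcases hs.1.eq_or_lt with rfl | hps
  exacts [hAp.le, (hneg s ⟨hps, hs.2.le⟩).le]

-- Integrating `v' ≤ -σ / (q - t)` gives `v t ≤ σ * log (q - t) + const`, unbounded below at `q`.
lemma exists_le_of_deriv_le_neg_div {v v' : ℝ → ℝ} {q σ κ : ℝ} (hσ : 0 < σ) (haq : a < q)
    (hv : ∀ t ∈ Ioo a q, HasDerivAt v (v' t) t)
    (hv' : ∀ t ∈ Ioo a q, κ < v t → v' t ≤ -σ / (q - t)) : ∃ t ∈ Ioo a q, v t ≤ κ := by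
  by_contra! hlarge
  obtain ⟨s, hs⟩ := nonempty_Ioo.2 haq
  have hlog : Tendsto (fun t => σ * Real.log (q - t)) (𝓝[<] q) atBot := by
    refine (Real.tendsto_log_nhdsGT_zero.comp
      (tendsto_nhdsWithin_iff.2 ⟨?_, ?_⟩)).const_mul_atBot hσ
    · simpa using ((tendsto_const_nhds (x := q)).sub (tendsto_id (x := 𝓝 q))).mono_left
        nhdsWithin_le_nhds
    · exact eventually_mem_nhdsWithin.mono fun t (ht : t < q) => sub_pos.2 ht
  obtain ⟨t, hlt, ht⟩ := ((hlog.eventually_lt_atBot (κ - v s + σ * Real.log (q - s))).and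
    (Ioo_mem_nhdsLT hs.2)).exists
  have hmem {r : ℝ} (hr : r ∈ Icc s t) : r ∈ Ioo a q :=
    ⟨hs.1.trans_le hr.1, hr.2.trans_lt ht.2⟩
  have hbound := nonpos_of_deriv_le_mul (K := 0)
    (g := fun t => v t - v s - (σ * Real.log (q - t) - σ * Real.log (q - s)))
    (g' := fun t => v' t - σ * (-1 / (q - t)))
    (fun r hr => ((hv r (hmem hr)).sub_const _).sub (((((hasDerivAt_id r).const_sub q).log
      (sub_pos.2 (hmem hr).2).ne').const_mul σ).sub_const _)) (by simp)
    (fun r hr _ => by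
      have hr' := hmem (Ico_subset_Icc_self hr)
      rw [zero_mul, sub_nonpos]
      exact (hv' r hr' (hlarge r hr')).trans_eq (by ring)) ⟨ht.1.le, le_rfl⟩
  linarith [hlarge t (hmem ⟨ht.1.le, le_rfl⟩)]

lemma eventually_le_of_deriv_le_neg_div {v v' : ℝ → ℝ} {q σ κ : ℝ} (hσ : 0 < σ)
    (hv : ∀ᶠ t in 𝓝[<] q, HasDerivAt v (v' t) t)
    (hv' : ∀ᶠ t in 𝓝[<] q, κ < v t → v' t ≤ -σ / (q - t)) : ∀ᶠ t in 𝓝[<] q, v t ≤ κ := by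
  obtain ⟨a, haq, ha⟩ := mem_nhdsLT_iff_exists_Ioo_subset.1 (hv.and hv')
  obtain ⟨s, hs, hvs⟩ := exists_le_of_deriv_le_neg_div hσ haq (fun t ht => (ha ht).1)
    fun t ht => (ha ht).2
  filter_upwards [Ioo_mem_nhdsLT hs.2] with t ht
  have hmem {r : ℝ} (hr : r ∈ Icc s t) : r ∈ Ioo a q :=
    ⟨hs.1.trans_le hr.1, hr.2.trans_lt ht.2⟩
  refine sub_nonpos.1 (nonpos_of_deriv_le_mul (K := 0) (fun r hr => (ha (hmem hr)).1.sub_const κ)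
    (sub_nonpos.2 hvs) (fun r hr hpos => ?_) ⟨ht.1.le, le_rfl⟩)
  have hr' := hmem (Ico_subset_Icc_self hr)
  refine ((ha hr').2 (sub_pos.1 hpos)).trans ?_
  rw [zero_mul]
  exact div_nonpos_of_nonpos_of_nonneg (neg_nonpos.2 hσ.le) (sub_pos.2 hr'.2).le

lemma hasDerivAt_max_zero_sq (y : ℝ) : HasDerivAt (fun y => max y 0 ^ 2) (2 * max y 0) y := by
  refine hasDerivAt_of_hasDerivAt_of_ne' (g := fun y => 2 * max y 0) (x := 0) (fun y hy => ?_)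
    (by fun_prop) (by fun_prop) y
  rcases lt_or_gt_of_ne hy with hneg | hpos
  · simpa [max_eq_right hneg.le] using (hasDerivAt_const y (0 : ℝ)).congr_of_eventuallyEq
      ((eventually_lt_nhds hneg).mono fun s hs => by simp [max_eq_right hs.le])
  · simpa [max_eq_left hpos.le] using (hasDerivAt_pow 2 y).congr_of_eventuallyEq
      ((eventually_gt_nhds hpos).mono fun s hs => by simp [max_eq_left hs.le])

end Comparison

lemma exists_periodic_solution_extending {E : Type*} [NormedAddCommGroup E] [NormedSpace ℝ E]
    {f : ℝ → E → E} {u : ℝ → E} {a T : ℝ} (hT : 0 < T) (hf : ∀ y, Function.Periodic (f · y) T)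
    (hu : ∀ t ∈ Icc a (a + T), HasDerivAt u (f t (u t)) t) (hper : u (a + T) = u a) :
    ∃ v : ℝ → E, Function.Periodic v T ∧ EqOn v u (Icc a (a + T)) ∧
      ∀ t, HasDerivAt v (f t (v t)) t := by
  let v : ℝ → E := u ∘ toIcoMod hT a
  have hvper : Function.Periodic v T := (toIcoMod_periodic hT a).comp u
  have hvu : EqOn v u (Icc a (a + T)) := fun t ht => by
    rcases ht.2.eq_or_lt with rfl | hlt
    · exact (congrArg u (toIcoMod_apply_right hT a)).trans hper.symm
    · exact congrArg u ((toIcoMod_eq_self hT).2 ⟨ht.1, hlt⟩)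
  have hpiece (n : ℤ) (t : ℝ) (ht : t - n • T ∈ Icc a (a + T)) :
      HasDerivWithinAt v (f t (v t)) (Icc (a + n • T) (a + T + n • T)) t := by
    have heq : f t (v t) = f (t - n • T) (u (t - n • T)) := by
      rw [← hvu ht, hvper.sub_zsmul_eq, (hf (v t)).sub_zsmul_eq]
    have hmem : t ∈ Icc (a + n • T) (a + T + n • T) := by
      rwa [← Set.preimage_sub_const_Icc]
    rw [heq]
    refine ((hu _ ht).comp_sub_const t (n • T)).hasDerivWithinAt.congr_of_mem (fun s hs => ?_) hmem
    rw [← Set.preimage_sub_const_Icc] at hs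
    rw [← hvu hs, hvper.sub_zsmul_eq]
  refine ⟨v, hvper, hvu, fun t => ?_⟩
  rw [← hasDerivWithinAt_univ, ← Iic_union_Ici (a := t)]
  have hleft := sub_toIocDiv_zsmul_mem_Ioc hT a t
  have hright := sub_toIcoDiv_zsmul_mem_Ico hT a t
  refine .union ((hpiece _ t (Ioc_subset_Icc_self hleft)).mono_of_mem_nhdsWithin ?_)
    ((hpiece _ t (Ico_subset_Icc_self hright)).mono_of_mem_nhdsWithin ?_)
  · exact Icc_mem_nhdsLE_of_mem (by rwa [← Set.preimage_sub_const_Ioc])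
  · exact Icc_mem_nhdsGE_of_mem (by rwa [← Set.preimage_sub_const_Ico])

/-- Time reversal `x ↦ -x(-·)`. It maps solutions of `(N)` with coefficients `A, B, C` to solutions
with coefficients `rev A, B(-·), rev C`, and interchanges positive and negative parts. -/
def rev (x : ℝ → ℝ) (t : ℝ) : ℝ := -x (-t)

@[simp]
lemma rev_rev (x : ℝ → ℝ) : rev (rev x) = x := by
  ext t
  simp [rev]

lemma periodic_rev {x : ℝ → ℝ} {T : ℝ} (hx : Function.Periodic x T) :
    Function.Periodic (rev x) T := fun t => by
  rw [rev, rev, neg_add', hx.sub_eq]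

lemma hasDerivAt_rev {x : ℝ → ℝ} {x' t : ℝ} (hx : HasDerivAt x x' (-t)) :
    HasDerivAt (rev x) x' t := by
  have := (hx.scomp t (hasDerivAt_neg t)).neg
  rwa [neg_one_smul, neg_neg] at this

lemma deriv_rev (x : ℝ → ℝ) (t : ℝ) : deriv (rev x) t = deriv x (-t) := by
  have : rev x = -fun s => x (-s) := rfl
  rw [this, deriv.neg, deriv_comp_neg, neg_neg]

lemma exists_deriv_eq_zero_of_periodic {A : ℝ → ℝ} {T : ℝ} (hA : Continuous A)
    (hper : Function.Periodic A T) (hT : 0 < T) : ∃ t, deriv A t = 0 :=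
  (exists_deriv_eq_zero hT hA.continuousOn (by rw [← hper 0, zero_add])).imp fun _ => And.right

/-- The smaller root of `r² - B(t) r - A'(t)`; at a zero `t` of `A` it is the slope with which the
nonconstant sign solution of `(N)` passes through zero. -/
noncomputable def zeroSlope (A B : ℝ → ℝ) (t : ℝ) : ℝ :=
  (B t - √(B t ^ 2 + 4 * deriv A t)) / 2

lemma zeroSlope_rev (A B : ℝ → ℝ) (t : ℝ) :
    zeroSlope (rev A) (fun s => B (-s)) t = zeroSlope A B (-t) := by
  rw [zeroSlope, zeroSlope, deriv_rev]

/-- Hypothesis (H) with simple zeros, for `B > 0`. The condition on the coefficients is expressed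
through a slope `m`: by `gap`, the lines of slope `m` through the zeros of `A` are barriers for
solutions of `(N)` over a period. The coefficients `B` and `C` need only be continuous. -/
structure Admissible (T : ℝ) (A B C : ℝ → ℝ) (m c : ℝ) : Prop where
  T_pos : 0 < T
  contDiff : ContDiff ℝ 1 A
  continuous_B : Continuous B
  continuous_C : Continuous C
  periodic_A : Function.Periodic A T
  periodic_B : Function.Periodic B T
  periodic_C : Function.Periodic C T
  exists_zero : ∃ t, A t = 0
  simple_zeros : ∀ t, A t = 0 → deriv A t ≠ 0
  m_pos : 0 < m
  abs_C_le : ∀ t, |C t| ≤ c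
  gap : ∀ s t, m ^ 2 * (1 + c * T) - deriv A s < m * B t

namespace Admissible

variable {T m c : ℝ} {A B C : ℝ → ℝ}

protected lemma rev (h : Admissible T A B C m c) :
    Admissible T (rev A) (fun t => B (-t)) (rev C) m c where
  T_pos := h.T_pos
  contDiff := (h.contDiff.comp contDiff_neg).neg
  continuous_B := h.continuous_B.comp continuous_neg
  continuous_C := (h.continuous_C.comp continuous_neg).neg
  periodic_A := periodic_rev h.periodic_A
  periodic_B t := by
    beta_reduce
    rw [neg_add', h.periodic_B.sub_eq]
  periodic_C := periodic_rev h.periodic_C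
  exists_zero := by
    obtain ⟨z, hz⟩ := h.exists_zero
    exact ⟨-z, by simp [rev, hz]⟩
  simple_zeros t ht := by
    rw [deriv_rev]
    exact h.simple_zeros _ (neg_eq_zero.1 ht)
  m_pos := h.m_pos
  abs_C_le t := (abs_neg _).trans_le (h.abs_C_le (-t))
  gap s t := by
    rw [deriv_rev]
    exact h.gap (-s) (-t)

protected lemma hasDerivAt (h : Admissible T A B C m c) (t : ℝ) : HasDerivAt A (deriv A t) t :=
  (h.contDiff.differentiable one_ne_zero t).hasDerivAt

lemma continuous_A (h : Admissible T A B C m c) : Continuous A := h.contDiff.continuous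

lemma c_nonneg (h : Admissible T A B C m c) : 0 ≤ c := (abs_nonneg _).trans (h.abs_C_le 0)

lemma C_le (h : Admissible T A B C m c) (t : ℝ) : C t ≤ c := (le_abs_self _).trans (h.abs_C_le t)

lemma neg_c_le (h : Admissible T A B C m c) (t : ℝ) : -c ≤ C t := neg_le_of_abs_le (h.abs_C_le t)

lemma exists_zero_le (h : Admissible T A B C m c) (t : ℝ) : ∃ z ≤ t, A z = 0 ∧ t < z + T := by
  obtain ⟨s, hs⟩ := h.exists_zero
  obtain ⟨z, hz, hzs⟩ := h.periodic_A.exists_mem_Ioc h.T_pos s (t - T)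
  exact ⟨z, by linarith [hz.2], hzs ▸ hs, by linarith [hz.1]⟩

lemma lt_sub (h : Admissible T A B C m c) (r : ℝ) {s t : ℝ} (hst : s < t) :
    (m ^ 2 * (1 + c * T) - m * B r) * (t - s) < A t - A s :=
  mul_sub_lt_image_sub_of_lt_deriv (h.contDiff.differentiable one_ne_zero)
    (fun p => by linarith [h.gap p r]) hst

lemma m_mul_lt_B (h : Admissible T A B C m c) (t : ℝ) : m * (1 + c * T) < B t := by
  obtain ⟨s, hs⟩ := exists_deriv_eq_zero_of_periodic h.continuous_A h.periodic_A h.T_pos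
  refine lt_of_mul_lt_mul_left ?_ h.m_pos.le
  linarith [h.gap s t]

lemma B_pos (h : Admissible T A B C m c) (t : ℝ) : 0 < B t := by
  have := h.c_nonneg
  have := h.T_pos
  have := h.m_pos
  exact lt_trans (by positivity) (h.m_mul_lt_B t)

lemma exists_root_gt (h : Admissible T A B C m c) (t : ℝ) :
    ∃ ρ, zeroSlope A B t < m ∧ m < ρ ∧
      ∀ r, r ^ 2 - B t * r - deriv A t = (r - zeroSlope A B t) * (r - ρ) := by
  have hdisc : (B t - 2 * m) ^ 2 < B t ^ 2 + 4 * deriv A t := by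
    have := mul_nonneg (mul_nonneg h.c_nonneg h.T_pos.le) (sq_nonneg m)
    nlinarith [h.gap t t]
  have hsqrt := abs_lt.1 (Real.lt_sqrt_of_sq_lt ((sq_abs _).trans_lt hdisc))
  have hsq := Real.sq_sqrt ((sq_nonneg _).trans hdisc.le)
  refine ⟨(B t + √(B t ^ 2 + 4 * deriv A t)) / 2, ?_, ?_, fun r => ?_⟩
  · rw [zeroSlope]
    linarith
  · linarith
  · rw [zeroSlope]
    linear_combination hsq / 4

lemma zeroSlope_neg (h : Admissible T A B C m c) {t : ℝ} (ht : 0 < deriv A t) :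
    zeroSlope A B t < 0 := by
  obtain ⟨ρ, -, hρ, hroot⟩ := h.exists_root_gt t
  have hρ_pos := h.m_pos.trans hρ
  have := hroot 0
  by_contra! hnonneg
  nlinarith [mul_nonneg hnonneg hρ_pos.le]

lemma zeroSlope_pos (h : Admissible T A B C m c) {t : ℝ} (ht : deriv A t < 0) :
    0 < zeroSlope A B t := by
  obtain ⟨ρ, -, hρ, hroot⟩ := h.exists_root_gt t
  have hρ_pos := h.m_pos.trans hρ
  have := hroot 0
  by_contra! hnonpos
  nlinarith [mul_nonneg (neg_nonneg.2 hnonpos) hρ_pos.le]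

lemma zeroSlope_ne_zero (h : Admissible T A B C m c) {t : ℝ} (ht : deriv A t ≠ 0) :
    zeroSlope A B t ≠ 0 :=
  ht.lt_or_gt.elim (fun ht => (h.zeroSlope_pos ht).ne') fun ht => (h.zeroSlope_neg ht).ne

lemma deriv_eq_zeroSlope_sq_sub (h : Admissible T A B C m c) (t : ℝ) :
    deriv A t = zeroSlope A B t ^ 2 - B t * zeroSlope A B t := by
  obtain ⟨ρ, -, -, hroot⟩ := h.exists_root_gt t
  linear_combination -hroot (zeroSlope A B t)

end Admissible

/-- The field `2 (A⁺ - B √w + C w)` of the equation for the square `w = (x⁻)²` of the negative part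
of a solution `x` of `(N)`, with `√w` cut off at height `M`. -/
noncomputable def truncatedField (A B C : ℝ → ℝ) (M t w : ℝ) : ℝ :=
  2 * (max (A t) 0 - B t * min (√w) M + C t * min (√w) M ^ 2)

/-- `w` is a nonnegative solution of `w' = 2 (A⁺ - B √w + C w)` that vanishes at the zeros of `A`,
as does the square `(x⁻)²` of the negative part of a solution `x` of `(N)` with `B > 0`. -/
structure IsNegPartSq (A B C w : ℝ → ℝ) : Prop where
  nonneg : ∀ t, 0 ≤ w t
  hasDerivAt : ∀ t, HasDerivAt w (2 * (max (A t) 0 - B t * √(w t) + C t * w t)) t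
  eq_zero : ∀ t, A t = 0 → w t = 0

section TruncatedField

variable {A B C w : ℝ → ℝ} {T m c M : ℝ}

lemma continuous_truncatedField (hA : Continuous A) (hB : Continuous B) (hC : Continuous C)
    (M : ℝ) :
    Continuous (Function.uncurry (truncatedField A B C M)) := by
  unfold truncatedField Function.uncurry
  fun_prop

lemma exists_norm_truncatedField_le (h : Admissible T A B C m c) (hM : 0 ≤ M) :
    ∃ L : NNReal, ∀ t w, ‖truncatedField A B C M t w‖ ≤ L := by
  obtain ⟨L, hL⟩ := ((isCompact_Icc (a := (0 : ℝ)) (b := T)).prod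
    (isCompact_Icc (a := (0 : ℝ)) (b := M ^ 2))).exists_bound_of_continuousOn
    (continuous_truncatedField h.continuous_A h.continuous_B h.continuous_C M).continuousOn
  refine ⟨L.toNNReal, fun t w => ?_⟩
  obtain ⟨s, hs, hper⟩ := Function.Periodic.exists_mem_Ico₀ (f := fun t => (A t, B t, C t))
    (fun t => by simp only [h.periodic_A t, h.periodic_B t, h.periodic_C t]) h.T_pos t
  obtain ⟨hAs, hBs, hCs⟩ : A t = A s ∧ B t = B s ∧ C t = C s := by simpa using hper
  have hcut : 0 ≤ min (√w) M := le_min (Real.sqrt_nonneg w) hM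
  have hmem : min (√w) M ^ 2 ∈ Icc 0 (M ^ 2) := ⟨by positivity, by gcongr; exact min_le_right _ _⟩
  refine le_trans ?_ ((hL (s, min (√w) M ^ 2) ⟨Ico_subset_Icc_self hs, hmem⟩).trans
    (le_max_left L 0))
  rw [Function.uncurry_apply_pair, truncatedField, truncatedField, Real.sqrt_sq hcut,
    min_eq_left (min_le_right (√w) M), hAs, hBs, hCs]

lemma truncatedField_of_sqrt_le {t y : ℝ} (hy : 0 ≤ y) (hM : √y ≤ M) :
    truncatedField A B C M t y = 2 * (max (A t) 0 - B t * √y + C t * y) := by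
  rw [truncatedField, min_eq_left hM, Real.sq_sqrt hy]

lemma nonneg_of_hasDerivAt_truncatedField {a b : ℝ} (hM : 0 ≤ M)
    (hw : ∀ t ∈ Icc a b, HasDerivAt w (truncatedField A B C M t (w t)) t) (ha : 0 ≤ w a) {t : ℝ}
    (ht : t ∈ Icc a b) : 0 ≤ w t := by
  refine neg_nonpos.1 (nonpos_of_deriv_le_mul (K := 0) (fun s hs => (hw s hs).neg)
    (neg_nonpos.2 ha) (fun s _ hs => ?_) ht)
  rw [truncatedField, Real.sqrt_eq_zero_of_nonpos (neg_pos.1 hs).le, min_eq_left hM]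
  linarith [le_max_right (A s) 0]

lemma truncatedField_add_le (h : Admissible T A B C m c) {q s y : ℝ} (hq : A q = 0) (hsq : s < q)
    (hqs : q - T ≤ s) (hy : (m * (q - s)) ^ 2 < y) :
    truncatedField A B C (m * T) s y + 2 * m ^ 2 * (q - s) ≤ 0 := by
  have hm := h.m_pos
  have hτ : 0 < m * (q - s) := mul_pos hm (sub_pos.2 hsq)
  set z := min (√y) (m * T)
  have hzT : z ≤ m * T := min_le_right _ _
  have hτz : m * (q - s) ≤ z :=
    le_min (Real.lt_sqrt_of_sq_lt hy).le (mul_le_mul_of_nonneg_left (by linarith) hm.le)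
  have hz : 0 < z := hτ.trans_le hτz
  have hslack := h.m_mul_lt_B s
  have hA : max (A s) 0 ≤ (B s - m * (1 + c * T)) * z := by
    refine (max_le ?_ ?_).trans (mul_le_mul_of_nonneg_left hτz (sub_nonneg.2 hslack.le))
    · nlinarith [h.lt_sub s hsq]
    · exact mul_nonneg (sub_nonneg.2 hslack.le) hτ.le
  have hC : C s * z ^ 2 ≤ c * (m * T) * z := by
    rw [pow_two, ← mul_assoc]
    gcongr
    · exact h.c_nonneg
    · exact h.C_le s
  rw [truncatedField]
  nlinarith

lemma le_sq_of_hasDerivAt_truncatedField (h : Admissible T A B C m c) {q : ℝ} (hq : A q = 0)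
    (hw : ∀ t ∈ Icc (q - T) q, HasDerivAt w (truncatedField A B C (m * T) t (w t)) t)
    (hinit : w (q - T) ≤ (m * T) ^ 2) {t : ℝ} (ht : t ∈ Icc (q - T) q) :
    w t ≤ (m * (q - t)) ^ 2 := by
  have hsq (s : ℝ) : HasDerivAt (fun s => (m * (q - s)) ^ 2) (-(2 * m ^ 2 * (q - s))) s := by
    refine ((((hasDerivAt_id' s).const_sub q).const_mul m).fun_pow 2).congr_deriv ?_
    norm_num
    ring
  refine sub_nonpos.1 (nonpos_of_deriv_le_mul (K := 0) (g := fun s => w s - (m * (q - s)) ^ 2)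
    (fun s hs => (hw s hs).sub (hsq s)) (by simpa using hinit) (fun s hs hpos => ?_) ht)
  linarith [truncatedField_add_le h hq hs.2 hs.1 (sub_pos.1 hpos)]

lemma exists_periodic_truncatedField (h : Admissible T A B C m c) :
    ∃ w : ℝ → ℝ, Function.Periodic w T ∧
      (∀ t, HasDerivAt w (truncatedField A B C (m * T) t (w t)) t) ∧
      (∀ t, 0 ≤ w t) ∧ ∀ t, w t ≤ (m * T) ^ 2 := by
  have hM : 0 ≤ m * T := (mul_pos h.m_pos h.T_pos).le
  obtain ⟨z, hz⟩ := h.exists_zero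
  obtain ⟨L, hL⟩ := exists_norm_truncatedField_le h hM
  have hzT : z ≤ z + T := (lt_add_of_pos_right z h.T_pos).le
  obtain ⟨u, hu, hu'⟩ := exists_hasDerivAt_of_continuous
    (continuous_truncatedField h.continuous_A h.continuous_B h.continuous_C _) hL (0 : ℝ) hzT
  have hu_nonneg : ∀ t ∈ Icc z (z + T), 0 ≤ u t := fun t =>
    nonneg_of_hasDerivAt_truncatedField hM hu' hu.ge
  have hu_le : ∀ t ∈ Icc z (z + T), u t ≤ (m * (z + T - t)) ^ 2 := fun t ht =>
    le_sq_of_hasDerivAt_truncatedField h ((h.periodic_A z).trans hz)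
      (by rwa [add_sub_cancel_right]) (by rw [add_sub_cancel_right, hu]; positivity)
      (by rwa [add_sub_cancel_right])
  have hu_end : u (z + T) = u z := by
    rw [hu]
    exact le_antisymm (by simpa using hu_le _ (right_mem_Icc.2 hzT))
      (hu_nonneg _ (right_mem_Icc.2 hzT))
  obtain ⟨w, hper, hwu, hw⟩ := exists_periodic_solution_extending h.T_pos
    (f := truncatedField A B C (m * T))
    (fun y t => by simp only [truncatedField, h.periodic_A t, h.periodic_B t, h.periodic_C t])
    hu' hu_end
  refine ⟨w, hper, hw, fun t => ?_, fun t => ?_⟩ <;>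
  obtain ⟨s, hs, hts⟩ := hper.exists_mem_Ico h.T_pos t z <;>
  rw [hts, hwu (Ico_subset_Icc_self hs)]
  · exact hu_nonneg s (Ico_subset_Icc_self hs)
  · refine (hu_le s (Ico_subset_Icc_self hs)).trans ?_
    have := h.m_pos
    have := hs.2
    gcongr
    linarith [hs.1]

theorem exists_periodic_isNegPartSq (h : Admissible T A B C m c) :
    ∃ w : ℝ → ℝ, IsNegPartSq A B C w ∧ Function.Periodic w T ∧
      ∀ q, A q = 0 → ∀ t ∈ Icc (q - T) q, √(w t) ≤ m * (q - t) := by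
  obtain ⟨w, hper, hw, hnonneg, hle⟩ := exists_periodic_truncatedField h
  have hbound : ∀ q, A q = 0 → ∀ t ∈ Icc (q - T) q, √(w t) ≤ m * (q - t) := fun q hq t ht =>
    Real.sqrt_le_iff.2 ⟨mul_nonneg h.m_pos.le (sub_nonneg.2 ht.2),
      le_sq_of_hasDerivAt_truncatedField h hq (fun s _ => hw s) (hle _) ht⟩
  refine ⟨w, ⟨hnonneg, fun t => ?_, fun q hq => ?_⟩, hper, hbound⟩
  · rw [← truncatedField_of_sqrt_le (hnonneg t)
      (Real.sqrt_le_iff.2 ⟨(mul_pos h.m_pos h.T_pos).le, hle t⟩)]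
    exact hw t
  · have := hbound q hq q ⟨(sub_lt_self q h.T_pos).le, le_rfl⟩
    rw [sub_self, mul_zero] at this
    exact le_antisymm (Real.sqrt_eq_zero'.1 (le_antisymm this (Real.sqrt_nonneg _))) (hnonneg q)

end TruncatedField

namespace IsNegPartSq

variable {A B C w w₁ w₂ : ℝ → ℝ} {T m c t : ℝ}

lemma pos (hw : IsNegPartSq A B C w) (ht : 0 < A t) : 0 < w t := by
  refine (hw.nonneg t).lt_of_ne fun h0 => ?_
  have hmin : IsLocalMin w t := .of_forall fun s => h0 ▸ hw.nonneg s
  have := hmin.hasDerivAt_eq_zero (hw.hasDerivAt t)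
  rw [← h0, Real.sqrt_zero, max_eq_left ht.le] at this
  linarith

lemma eq_zero_of_nonpos (h : Admissible T A B C m c) (hw : IsNegPartSq A B C w) (ht : A t ≤ 0) :
    w t = 0 := by
  rcases ht.eq_or_lt with ht | ht
  · exact hw.eq_zero t ht
  obtain ⟨z, hzt, hz, -⟩ := h.exists_zero_le t
  refine le_antisymm (nonpos_of_neg_of_deriv_le_mul (K := 2 * c) h.continuous_A hw.hasDerivAt
    hw.eq_zero (fun s hs _ => ?_) hz hzt ht) (hw.nonneg t)
  rw [max_eq_right hs]
  linarith [mul_nonneg (h.B_pos s).le (Real.sqrt_nonneg (w s)),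
    mul_le_mul_of_nonneg_right (h.C_le s) (hw.nonneg s)]

protected lemma le (h : Admissible T A B C m c) (hw₁ : IsNegPartSq A B C w₁)
    (hw₂ : IsNegPartSq A B C w₂) (t : ℝ) : w₁ t ≤ w₂ t := by
  obtain ⟨z, hzt, hz, -⟩ := h.exists_zero_le t
  refine sub_nonpos.1 (nonpos_of_deriv_le_mul (K := 2 * c)
    (fun s _ => (hw₁.hasDerivAt s).sub (hw₂.hasDerivAt s)) (g := fun s => w₁ s - w₂ s)
    (by rw [hw₁.eq_zero z hz, hw₂.eq_zero z hz, sub_self]) (fun s _ hpos => ?_) ⟨hzt, le_rfl⟩)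
  linarith [mul_le_mul_of_nonneg_left (Real.sqrt_le_sqrt (sub_pos.1 hpos).le) (h.B_pos s).le,
    mul_le_mul_of_nonneg_right (h.C_le s) hpos.le]

protected lemma eq (h : Admissible T A B C m c) (hw₁ : IsNegPartSq A B C w₁)
    (hw₂ : IsNegPartSq A B C w₂) : w₁ = w₂ :=
  funext fun t => le_antisymm (hw₁.le h hw₂ t) (hw₂.le h hw₁ t)

lemma sqrt_le (h : Admissible T A B C m c) (hw : IsNegPartSq A B C w) {q : ℝ} (hq : A q = 0)
    (ht : t ∈ Icc (q - T) q) : √(w t) ≤ m * (q - t) := by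
  obtain ⟨v, hv, -, hle⟩ := exists_periodic_isNegPartSq h
  rw [hw.eq h hv]
  exact hle q hq t ht

lemma hasDerivAt_sqrt (hw : IsNegPartSq A B C w) (ht : 0 < A t) :
    HasDerivAt (fun s => √(w s)) (A t / √(w t) - B t + C t * √(w t)) t := by
  have hpos := hw.pos ht
  have hsqrt : √(w t) ≠ 0 := (Real.sqrt_pos.2 hpos).ne'
  convert (hw.hasDerivAt t).sqrt hpos.ne' using 1
  rw [max_eq_left ht.le]
  field_simp
  rw [Real.sq_sqrt hpos.le, mul_comm (w t)]

end IsNegPartSq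

lemma tendsto_div_sub_of_eq_zero {f : ℝ → ℝ} {f' z : ℝ} (hf : HasDerivAt f f' z) (hz : f z = 0) :
    Tendsto (fun t => f t / (t - z)) (𝓝[≠] z) (𝓝 f') :=
  hf.tendsto_slope.congr fun t => by rw [slope_def_field, hz, sub_zero]

lemma tendsto_div_of_eq_zero {f g : ℝ → ℝ} {f' g' z : ℝ} (hf : HasDerivAt f f' z)
    (hg : HasDerivAt g g' z) (hfz : f z = 0) (hgz : g z = 0) (hg' : g' ≠ 0) :
    Tendsto (fun t => f t / g t) (𝓝[≠] z) (𝓝 (f' / g')) := by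
  refine ((tendsto_div_sub_of_eq_zero hf hfz).div
    (tendsto_div_sub_of_eq_zero hg hgz) hg').congr' ?_
  filter_upwards [self_mem_nhdsWithin] with t ht
  exact div_div_div_cancel_right₀ (sub_ne_zero.2 ht) _ _

lemma eventually_pos_right {f : ℝ → ℝ} {f' z : ℝ} (hf : HasDerivAt f f' z) (hz : f z = 0)
    (hf' : 0 < f') : ∀ᶠ t in 𝓝[>] z, 0 < f t := by
  filter_upwards [((tendsto_div_sub_of_eq_zero hf hz).mono_left (nhdsGT_le_nhdsNE z)).eventually
    (lt_mem_nhds hf'), self_mem_nhdsWithin] with t ht hzt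
  exact (div_pos_iff_of_pos_right (sub_pos.2 hzt)).1 ht

lemma eventually_pos_left {f : ℝ → ℝ} {f' z : ℝ} (hf : HasDerivAt f f' z) (hz : f z = 0)
    (hf' : f' < 0) : ∀ᶠ t in 𝓝[<] z, 0 < f t := by
  filter_upwards [((tendsto_div_sub_of_eq_zero hf hz).mono_left (nhdsLT_le_nhdsNE z)).eventually
    (gt_mem_nhds hf'), self_mem_nhdsWithin] with t ht htz
  by_contra! hle
  exact ht.not_ge (div_nonneg_of_nonpos hle (sub_neg.2 htz).le)

namespace IsNegPartSq

variable {A B C w : ℝ → ℝ} {T m c z q k : ℝ}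

-- The sign of `A / (t - z) - B k + C k² (t - z) - k²` decides whether the parabola
-- `(k (t - z))²` is an upper or a lower barrier for `w`.
lemma tendsto_parabola_defect (h : Admissible T A B C m c) (hz : A z = 0) (k : ℝ) :
    Tendsto (fun t => A t / (t - z) - B t * k + C t * k ^ 2 * (t - z) - k ^ 2) (𝓝[>] z)
      (𝓝 (deriv A z - B z * k - k ^ 2)) := by
  have hcont : Continuous fun t => -B t * k + C t * k ^ 2 * (t - z) - k ^ 2 := by
    have := h.continuous_B
    have := h.continuous_C
    fun_prop
  have := ((tendsto_div_sub_of_eq_zero (h.hasDerivAt z) hz).mono_left (nhdsGT_le_nhdsNE z)).add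
    (hcont.continuousWithinAt (s := Ioi z) (x := z)).tendsto
  convert this using 2 <;> ring

lemma hasDerivAt_sub_parabola (hw : IsNegPartSq A B C w) (k z t : ℝ) :
    HasDerivAt (fun s => w s - (k * (s - z)) ^ 2)
      (2 * (max (A t) 0 - B t * √(w t) + C t * w t) - 2 * k ^ 2 * (t - z)) t := by
  refine ((hw.hasDerivAt t).sub
    ((((hasDerivAt_id' t).sub_const z).const_mul k).fun_pow 2)).congr_deriv ?_
  norm_num
  ring

lemma deriv_sub_parabola_eq {t : ℝ} (hzt : z < t) (hA : 0 < A t) (k : ℝ) :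
    2 * (max (A t) 0 - B t * √(w t) + C t * w t) - 2 * k ^ 2 * (t - z) =
      2 * (t - z) * (A t / (t - z) - B t * k + C t * k ^ 2 * (t - z) - k ^ 2) -
        2 * B t * (√(w t) - k * (t - z)) + 2 * C t * (w t - (k * (t - z)) ^ 2) := by
  have := (sub_pos.2 hzt).ne'
  rw [max_eq_left hA.le]
  field_simp
  ring

lemma eventually_sqrt_le (h : Admissible T A B C m c) (hw : IsNegPartSq A B C w) (hz : A z = 0)
    (hz' : 0 < deriv A z) (hk : 0 ≤ k) (hdefect : deriv A z - B z * k - k ^ 2 < 0) :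
    ∀ᶠ t in 𝓝[>] z, √(w t) ≤ k * (t - z) := by
  obtain ⟨d, hd, hsub⟩ := mem_nhdsGT_iff_exists_Ioo_subset.1
    (((tendsto_parabola_defect h hz k).eventually (gt_mem_nhds hdefect)).and
      (eventually_pos_right (h.hasDerivAt z) hz hz'))
  filter_upwards [Ioo_mem_nhdsGT hd] with t ht
  have hzt := sub_nonneg.2 ht.1.le
  refine Real.sqrt_le_iff.2 ⟨by positivity, sub_nonpos.1 ?_⟩
  refine nonpos_of_deriv_le_mul (K := 2 * c) (fun s _ => hasDerivAt_sub_parabola hw k z s)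
    (by simp [hw.eq_zero z hz]) (fun s hs hpos => ?_) ⟨ht.1.le, le_rfl⟩
  obtain rfl | hzs := hs.1.eq_or_lt
  · simp [hw.eq_zero z hz] at hpos
  obtain ⟨hneg, hA⟩ := hsub ⟨hzs, hs.2.trans ht.2⟩
  have hτ := sub_pos.2 hzs
  have hsqrt : k * (s - z) ≤ √(w s) := Real.le_sqrt_of_sq_le (sub_pos.1 hpos).le
  rw [deriv_sub_parabola_eq hzs hA]
  nlinarith [mul_neg_of_pos_of_neg hτ hneg,
    mul_nonneg (h.B_pos s).le (sub_nonneg.2 hsqrt),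
    mul_le_mul_of_nonneg_right (h.C_le s) hpos.le]

lemma eventually_le_sqrt (h : Admissible T A B C m c) (hw : IsNegPartSq A B C w) (hz : A z = 0)
    (hz' : 0 < deriv A z) (hk : 0 ≤ k) (hdefect : 0 < deriv A z - B z * k - k ^ 2) :
    ∀ᶠ t in 𝓝[>] z, k * (t - z) ≤ √(w t) := by
  obtain ⟨d, hd, hsub⟩ := mem_nhdsGT_iff_exists_Ioo_subset.1
    (((tendsto_parabola_defect h hz k).eventually (lt_mem_nhds hdefect)).and
      (eventually_pos_right (h.hasDerivAt z) hz hz'))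
  filter_upwards [Ioo_mem_nhdsGT hd] with t ht
  refine Real.le_sqrt_of_sq_le (sub_nonneg.1 (neg_nonpos.1 ?_))
  refine nonpos_of_deriv_le_mul (K := 2 * c) (fun s _ => (hasDerivAt_sub_parabola hw k z s).fun_neg)
    (by simp [hw.eq_zero z hz]) (fun s hs hpos => ?_) ⟨ht.1.le, le_rfl⟩
  obtain rfl | hzs := hs.1.eq_or_lt
  · simp [hw.eq_zero z hz] at hpos
  obtain ⟨hdef_pos, hA⟩ := hsub ⟨hzs, hs.2.trans ht.2⟩
  have hτ := sub_pos.2 hzs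
  have hsqrt : √(w s) ≤ k * (s - z) :=
    Real.sqrt_le_iff.2 ⟨by positivity, by linarith [neg_pos.1 hpos]⟩
  rw [deriv_sub_parabola_eq hzs hA]
  nlinarith [mul_pos hτ hdef_pos, mul_nonneg (h.B_pos s).le (sub_nonneg.2 hsqrt),
    mul_le_mul_of_nonneg_right (h.C_le s) hpos.le]

lemma hasDerivWithinAt_sqrt_Ici (h : Admissible T A B C m c) (hw : IsNegPartSq A B C w)
    (hz : A z = 0) (hz' : 0 < deriv A z) :
    HasDerivWithinAt (fun t => √(w t)) (-zeroSlope A B z) (Ici z) z := by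
  refine HasDerivWithinAt.Ici_of_Ioi ((hasDerivWithinAt_iff_tendsto_slope' self_notMem_Ioi).2 ?_)
  obtain ⟨ρ, -, hmρ, hroot⟩ := h.exists_root_gt z
  have hm := h.m_pos
  have hξ := h.zeroSlope_neg hz'
  have hfactor (k : ℝ) : deriv A z - B z * k - k ^ 2 = -(k + zeroSlope A B z) * (k + ρ) := by
    linear_combination -hroot (-k)
  have hslope (t : ℝ) : slope (fun t => √(w t)) z t = √(w t) / (t - z) := by
    simp only [slope_def_field, hw.eq_zero z hz, Real.sqrt_zero, sub_zero]
  refine tendsto_order.2 ⟨fun a ha => ?_, fun b hb => ?_⟩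
  · obtain ⟨k, hak, hkξ⟩ := exists_between (max_lt ha (neg_pos.2 hξ))
    have hk := (le_max_right _ _).trans_lt hak
    filter_upwards [eventually_le_sqrt h hw hz hz' hk.le (by rw [hfactor]; nlinarith),
      self_mem_nhdsWithin] with t ht hzt
    rw [hslope, lt_div_iff₀ (sub_pos.2 hzt)]
    exact (mul_lt_mul_of_pos_right ((le_max_left _ _).trans_lt hak) (sub_pos.2 hzt)).trans_le ht
  · obtain ⟨k, hξk, hkb⟩ := exists_between hb
    have hk : 0 < k := (neg_pos.2 hξ).trans hξk
    filter_upwards [eventually_sqrt_le h hw hz hz' hk.le (by rw [hfactor]; nlinarith),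
      self_mem_nhdsWithin] with t ht hzt
    rw [hslope, div_lt_iff₀ (sub_pos.2 hzt)]
    exact ht.trans_lt (mul_lt_mul_of_pos_right hkb (sub_pos.2 hzt))

lemma hasDerivAt_sq_slope_sub (hw : IsNegPartSq A B C w) (ξ : ℝ) {t : ℝ} (hA : 0 < A t)
    (htq : t < q) :
    HasDerivAt (fun s => (√(w s) / (q - s) - ξ) ^ 2)
      (2 * ((√(w t) / (q - t) - ξ) * (A t / (q - t) - B t * (√(w t) / (q - t)) +
        (√(w t) / (q - t)) ^ 2 + C t * (√(w t) / (q - t)) ^ 2 * (q - t))) /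
        (√(w t) / (q - t) * (q - t))) t := by
  have hτ := (sub_pos.2 htq).ne'
  have hu := (Real.sqrt_pos.2 (hw.pos hA)).ne'
  refine ((((hw.hasDerivAt_sqrt hA).fun_div ((hasDerivAt_id' t).const_sub q) hτ).sub_const
    ξ).fun_pow 2).congr_deriv ?_
  simp only [Nat.cast_ofNat, Nat.add_one_sub_one, pow_one]
  field_simp
  ring

lemma sub_mul_le_of_close_to_quadratic {r ξ ρ N e ε : ℝ} (hr : 0 ≤ r) (hrm : r ≤ m) (hξ : 0 ≤ ξ)
    (hξm : ξ ≤ m) (hmρ : m < ρ) (hN : |N - (r - ξ) * (r - ρ)| ≤ e)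
    (he : m * e ≤ ε * (ρ - m) / 2) (hε : ε < (r - ξ) ^ 2) : (r - ξ) * N ≤ -(ε * (ρ - m) / 2) := by
  have habs : |r - ξ| ≤ m := abs_sub_le_iff.2 ⟨by linarith, by linarith⟩
  have herr : (r - ξ) * (N - (r - ξ) * (r - ρ)) ≤ m * e :=
    (le_abs_self _).trans (by rw [abs_mul]; gcongr; exact (abs_nonneg _).trans habs)
  have hmain : ε * (ρ - m) ≤ (r - ξ) ^ 2 * (ρ - r) := by
    nlinarith [mul_nonneg (sq_nonneg (r - ξ)) (sub_nonneg.2 hrm)]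
  linarith

lemma tendsto_coefficient_error (h : Admissible T A B C m c) (hq : A q = 0) :
    Tendsto (fun t => |A t / (q - t) + deriv A q| + |B t - B q| * m + c * m ^ 2 * (q - t))
      (𝓝[<] q) (𝓝 0) := by
  have hA : Tendsto (fun t => A t / (q - t)) (𝓝[<] q) (𝓝 (-deriv A q)) := by
    refine ((tendsto_div_sub_of_eq_zero (h.hasDerivAt q) hq).neg.mono_left
      (nhdsLT_le_nhdsNE q)).congr fun t => ?_
    rw [← div_neg, neg_sub]
  have hcont : Continuous fun t => |B t - B q| * m + c * m ^ 2 * (q - t) := by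
    have := h.continuous_B
    fun_prop
  have := (hA.add_const (deriv A q)).abs.add
    (hcont.continuousWithinAt (s := Iio q) (x := q)).tendsto
  simpa only [neg_add_cancel, sub_self, abs_zero, zero_mul, mul_zero, add_zero, add_assoc]
    using this

lemma abs_coefficient_error_le (h : Admissible T A B C m c) {t r : ℝ} (hr : 0 ≤ r) (hrm : r ≤ m)
    (htq : t < q) :
    |A t / (q - t) - B t * r + r ^ 2 + C t * r ^ 2 * (q - t) - (r ^ 2 - B q * r - deriv A q)| ≤
      |A t / (q - t) + deriv A q| + |B t - B q| * m + c * m ^ 2 * (q - t) := by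
  have hτ := (sub_pos.2 htq).le
  have hc := h.c_nonneg
  have hB : |(B t - B q) * r| ≤ |B t - B q| * m := by
    rw [abs_mul, abs_of_nonneg hr]
    gcongr
  have hC : |C t * r ^ 2 * (q - t)| ≤ c * m ^ 2 * (q - t) := by
    rw [abs_mul, abs_mul, abs_of_nonneg hτ, abs_of_nonneg (sq_nonneg r)]
    gcongr
    exact h.abs_C_le t
  calc _ = |A t / (q - t) + deriv A q - (B t - B q) * r + C t * r ^ 2 * (q - t)| := by ring_nf
    _ ≤ |A t / (q - t) + deriv A q| + |(B t - B q) * r| + |C t * r ^ 2 * (q - t)| :=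
      (abs_add_le _ _).trans (by gcongr; exact abs_sub _ _)
    _ ≤ _ := by gcongr

-- In the limit `t → q` the equation for `√w / (q - t)` has the equilibria `zeroSlope A B q < m` and
-- `ρ > m`, so that a solution which stays below `m` is attracted by the first one.
lemma eventually_sq_slope_sub_le (h : Admissible T A B C m c) (hw : IsNegPartSq A B C w)
    (hq : A q = 0) (hq' : deriv A q < 0)
    {ε : ℝ} (hε : 0 < ε) :
    ∀ᶠ t in 𝓝[<] q, (√(w t) / (q - t) - zeroSlope A B q) ^ 2 ≤ ε := by
  obtain ⟨ρ, hξm, hmρ, hroot⟩ := h.exists_root_gt q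
  have hm := h.m_pos
  have hξ := h.zeroSlope_pos hq'
  have := sub_pos.2 hmρ
  have hpos := eventually_pos_left (h.hasDerivAt q) hq hq'
  have herror := (tendsto_coefficient_error h hq).const_mul m
  rw [mul_zero] at herror
  have hsmall := herror.eventually (gt_mem_nhds (show 0 < ε * (ρ - m) / 2 by positivity))
  refine eventually_le_of_deriv_le_neg_div (σ := ε * (ρ - m) / m) (by positivity)
    (by filter_upwards [hpos, self_mem_nhdsWithin] with t hA htq using
      hasDerivAt_sq_slope_sub hw (zeroSlope A B q) hA htq) ?_
  filter_upwards [hpos, hsmall, Ioo_mem_nhdsLT (sub_lt_self q h.T_pos)] with t hA hE ht hfar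
  have hτ := sub_pos.2 ht.2
  have hr : 0 < √(w t) / (q - t) := div_pos (Real.sqrt_pos.2 (hw.pos hA)) hτ
  have hrm : √(w t) / (q - t) ≤ m := (div_le_iff₀ hτ).2 (hw.sqrt_le h hq ⟨ht.1.le, ht.2.le⟩)
  have herr := abs_coefficient_error_le h hr.le hrm ht.2
  rw [hroot] at herr
  have hdecay := sub_mul_le_of_close_to_quadratic hr.le hrm hξ.le hξm.le hmρ herr hE.le hfar
  rw [neg_div, div_div, ← neg_div]
  calc _ ≤ -(ε * (ρ - m)) / (√(w t) / (q - t) * (q - t)) := by gcongr; linarith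
    _ ≤ -(ε * (ρ - m)) / (m * (q - t)) := by
      rw [neg_div, neg_div]
      gcongr

lemma hasDerivWithinAt_sqrt_Iic (h : Admissible T A B C m c) (hw : IsNegPartSq A B C w)
    (hq : A q = 0) (hq' : deriv A q < 0) :
    HasDerivWithinAt (fun t => √(w t)) (-zeroSlope A B q) (Iic q) q := by
  have htendsto : Tendsto (fun t => √(w t) / (q - t)) (𝓝[<] q) (𝓝 (zeroSlope A B q)) := by
    refine Metric.tendsto_nhds.2 fun ε hε => ?_
    filter_upwards [eventually_sq_slope_sub_le h hw hq hq' (pow_pos (half_pos hε) 2)]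
      with t ht
    exact (abs_le_of_sq_le_sq ht (half_pos hε).le).trans_lt (half_lt_self hε)
  refine HasDerivWithinAt.Iic_of_Iio ((hasDerivWithinAt_iff_tendsto_slope' self_notMem_Iio).2 ?_)
  refine htendsto.neg.congr fun t => ?_
  rw [slope_def_field, hw.eq_zero q hq, Real.sqrt_zero, sub_zero, ← div_neg, neg_sub]

end IsNegPartSq

/-- A `C¹`, `T`-periodic solution of `(N)` that vanishes somewhere. When `A` is not identically zero
these are the `C¹` solutions with nonconstant sign. -/
structure IsVanishingSolution (T : ℝ) (A B C x : ℝ → ℝ) : Prop where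
  contDiff : ContDiff ℝ 1 x
  periodic : Function.Periodic x T
  mul_deriv : ∀ t, x t * deriv x t = A t + B t * x t + C t * x t ^ 2
  exists_zero : ∃ t, x t = 0

lemma hasDerivWithinAt_rev {x : ℝ → ℝ} {x' t : ℝ} {s u : Set ℝ}
    (hx : HasDerivWithinAt x x' s (-t)) (hus : MapsTo Neg.neg u s) :
    HasDerivWithinAt (rev x) x' u t := by
  have := (hx.scomp t (hasDerivWithinAt_neg t u) hus).neg
  rwa [neg_one_smul, neg_neg] at this

section Existence

variable {A B C x w₁ w₂ : ℝ → ℝ} {T m c t z : ℝ}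

lemma contDiff_of_slope_at_zeros (h : Admissible T A B C m c)
    (hne : ∀ t, A t ≠ 0 → x t ≠ 0 ∧ HasDerivAt x (A t / x t + B t + C t * x t) t)
    (hzero : ∀ z, A z = 0 → x z = 0 ∧ HasDerivAt x (zeroSlope A B z) z) : ContDiff ℝ 1 x := by
  have hdiff : Differentiable ℝ x := fun t => by
    by_cases ht : A t = 0
    exacts [(hzero t ht).2.differentiableAt, (hne t ht).2.differentiableAt]
  refine contDiff_one_iff_deriv.2 ⟨hdiff, continuous_iff_continuousAt.2 fun t => ?_⟩
  by_cases ht : A t = 0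
  · obtain ⟨hxt, hx⟩ := hzero t ht
    have hξ := h.zeroSlope_ne_zero (h.simple_zeros t ht)
    have hquot : Tendsto (fun s => A s / x s) (𝓝[≠] t) (𝓝 (deriv A t / zeroSlope A B t)) :=
      tendsto_div_of_eq_zero (h.hasDerivAt t) hx ht hxt hξ
    have hrest : Tendsto (fun s => B s + C s * x s) (𝓝[≠] t) (𝓝 (B t + C t * x t)) :=
      (h.continuous_B.add (h.continuous_C.mul hdiff.continuous)).continuousWithinAt
    rw [continuousAt_iff_punctured_nhds, hx.deriv]
    have hlim : deriv A t / zeroSlope A B t + (B t + C t * x t) = zeroSlope A B t := by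
      rw [hxt, h.deriv_eq_zeroSlope_sq_sub]
      field_simp
      ring
    refine (hlim ▸ hquot.add hrest).congr' ?_
    filter_upwards [(h.hasDerivAt t).eventually_ne (h.simple_zeros t ht) (c := 0)] with s hs
    rw [(hne s hs).2.deriv, add_assoc]
  · have hderiv : (fun s => A s / x s + B s + C s * x s) =ᶠ[𝓝 t] deriv x :=
      (h.continuous_A.continuousAt.eventually_ne ht).mono fun s hs => (hne s hs).2.deriv.symm
    exact (((h.continuous_A.continuousAt.div hdiff.continuous.continuousAt (hne t ht).1).add
      h.continuous_B.continuousAt).add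
      (h.continuous_C.mul hdiff.continuous).continuousAt).congr hderiv

/-- The function with positive part `√w₂(-·)` and negative part `√w₁`. -/
noncomputable def glue (w₁ w₂ : ℝ → ℝ) (t : ℝ) : ℝ := √(w₂ (-t)) - √(w₁ t)

lemma rev_glue (w₁ w₂ : ℝ → ℝ) : rev (glue w₁ w₂) = glue w₂ w₁ := by
  ext t
  simp [rev, glue]

lemma glue_of_nonneg (h : Admissible T A B C m c)
    (hw₂ : IsNegPartSq (rev A) (fun t => B (-t)) (rev C) w₂) (ht : 0 ≤ A t) :
    glue w₁ w₂ t = -√(w₁ t) := by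
  rw [glue, hw₂.eq_zero_of_nonpos h.rev (by simpa [rev] using ht), Real.sqrt_zero, zero_sub]

lemma glue_of_nonpos (h : Admissible T A B C m c) (hw₁ : IsNegPartSq A B C w₁) (ht : A t ≤ 0) :
    glue w₁ w₂ t = √(w₂ (-t)) := by
  rw [glue, hw₁.eq_zero_of_nonpos h ht, Real.sqrt_zero, sub_zero]

lemma hasDerivAt_glue_of_pos (h : Admissible T A B C m c) (hw₁ : IsNegPartSq A B C w₁)
    (hw₂ : IsNegPartSq (rev A) (fun t => B (-t)) (rev C) w₂) (ht : 0 < A t) :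
    glue w₁ w₂ t ≠ 0 ∧
      HasDerivAt (glue w₁ w₂) (A t / glue w₁ w₂ t + B t + C t * glue w₁ w₂ t) t := by
  have heq : glue w₁ w₂ =ᶠ[𝓝 t] fun s => -√(w₁ s) :=
    (h.continuous_A.continuousAt.eventually (lt_mem_nhds ht)).mono fun s hs =>
      glue_of_nonneg h hw₂ hs.le
  rw [glue_of_nonneg h hw₂ ht.le]
  refine ⟨neg_ne_zero.2 (Real.sqrt_pos.2 (hw₁.pos ht)).ne', ?_⟩
  exact ((hw₁.hasDerivAt_sqrt ht).fun_neg.congr_of_eventuallyEq heq).congr_deriv (by ring)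

lemma hasDerivWithinAt_glue_Ici (h : Admissible T A B C m c) (hw₁ : IsNegPartSq A B C w₁)
    (hw₂ : IsNegPartSq (rev A) (fun t => B (-t)) (rev C) w₂) (hz : A z = 0) :
    HasDerivWithinAt (glue w₁ w₂) (zeroSlope A B z) (Ici z) z := by
  refine HasDerivWithinAt.Ici_of_Ioi ?_
  rcases (h.simple_zeros z hz).lt_or_gt with hz' | hz'
  · have hrev : HasDerivWithinAt (fun s => √(w₂ s)) (-zeroSlope A B z) (Iic (-z)) (-z) := by
      have := hw₂.hasDerivWithinAt_sqrt_Iic h.rev (q := -z) (by simp [rev, hz])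
        (by simpa [deriv_rev] using hz')
      rwa [zeroSlope_rev, neg_neg] at this
    have hglue := (hasDerivWithinAt_rev hrev (u := Ioi z)
      fun t ht => neg_le_neg (mem_Ioi.1 ht).le).fun_neg
    rw [neg_neg] at hglue
    refine hglue.congr_of_eventuallyEq ?_ ?_
    · filter_upwards [eventually_pos_right (h.hasDerivAt z).neg (by simp [hz]) (neg_pos.2 hz')]
        with t ht
      simp [rev, glue_of_nonpos h hw₁ (neg_pos.1 ht).le]
    · simp [rev, glue_of_nonpos h hw₁ hz.le]
  · have hglue := (hw₁.hasDerivWithinAt_sqrt_Ici h hz hz').fun_neg.mono Ioi_subset_Ici_self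
    rw [neg_neg] at hglue
    refine hglue.congr_of_eventuallyEq ?_ (glue_of_nonneg h hw₂ hz.ge)
    filter_upwards [eventually_pos_right (h.hasDerivAt z) hz hz'] with t ht
    exact glue_of_nonneg h hw₂ ht.le

lemma hasDerivAt_glue_of_neg (h : Admissible T A B C m c) (hw₁ : IsNegPartSq A B C w₁)
    (hw₂ : IsNegPartSq (rev A) (fun t => B (-t)) (rev C) w₂) (ht : A t < 0) :
    glue w₁ w₂ t ≠ 0 ∧
      HasDerivAt (glue w₁ w₂) (A t / glue w₁ w₂ t + B t + C t * glue w₁ w₂ t) t := by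
  have hrev := hasDerivAt_glue_of_pos (t := -t) (w₂ := w₁) h.rev hw₂ (by simpa using hw₁)
    (by simpa [rev] using ht)
  have hglue : glue w₁ w₂ t = -glue w₂ w₁ (-t) := by rw [← rev_glue, rev]
  refine ⟨hglue ▸ neg_ne_zero.2 hrev.1, ?_⟩
  have hderiv := hasDerivAt_rev hrev.2
  rw [rev_glue] at hderiv
  refine hderiv.congr_deriv ?_
  simp only [hglue, rev, neg_neg]
  ring

lemma hasDerivAt_glue_of_eq_zero (h : Admissible T A B C m c) (hw₁ : IsNegPartSq A B C w₁)
    (hw₂ : IsNegPartSq (rev A) (fun t => B (-t)) (rev C) w₂) (hz : A z = 0) :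
    HasDerivAt (glue w₁ w₂) (zeroSlope A B z) z := by
  have hrev := hasDerivWithinAt_glue_Ici (z := -z) (w₂ := w₁) h.rev hw₂ (by simpa using hw₁)
    (by simp [rev, hz])
  rw [zeroSlope_rev, neg_neg] at hrev
  have hleft := hasDerivWithinAt_rev hrev (u := Iic z) fun t ht => neg_le_neg (mem_Iic.1 ht)
  rw [rev_glue] at hleft
  have := hleft.union (hasDerivWithinAt_glue_Ici h hw₁ hw₂ hz)
  rwa [Iic_union_Ici, hasDerivWithinAt_univ] at this

theorem exists_isVanishingSolution (h : Admissible T A B C m c) :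
    ∃ x, IsVanishingSolution T A B C x := by
  obtain ⟨w₁, hw₁, hper₁, -⟩ := exists_periodic_isNegPartSq h
  obtain ⟨w₂, hw₂, hper₂, -⟩ := exists_periodic_isNegPartSq h.rev
  have hne (t : ℝ) (ht : A t ≠ 0) : glue w₁ w₂ t ≠ 0 ∧
      HasDerivAt (glue w₁ w₂) (A t / glue w₁ w₂ t + B t + C t * glue w₁ w₂ t) t :=
    ht.lt_or_gt.elim (hasDerivAt_glue_of_neg h hw₁ hw₂) (hasDerivAt_glue_of_pos h hw₁ hw₂)
  have hzero (z : ℝ) (hz : A z = 0) :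
      glue w₁ w₂ z = 0 ∧ HasDerivAt (glue w₁ w₂) (zeroSlope A B z) z := by
    refine ⟨?_, hasDerivAt_glue_of_eq_zero h hw₁ hw₂ hz⟩
    rw [glue_of_nonneg h hw₂ hz.ge, hw₁.eq_zero z hz, Real.sqrt_zero, neg_zero]
  refine ⟨glue w₁ w₂, contDiff_of_slope_at_zeros h hne hzero, fun t => ?_, fun t => ?_,
    h.exists_zero.imp fun z hz => (hzero z hz).1⟩
  · rw [glue, glue, neg_add', hper₂.sub_eq, hper₁]
  · by_cases ht : A t = 0
    · simp [(hzero t ht).1, ht]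
    · obtain ⟨hx, hx'⟩ := hne t ht
      rw [hx'.deriv]
      field_simp

end Existence

namespace IsVanishingSolution

variable {A B C x y : ℝ → ℝ} {T m c t z : ℝ}

protected lemma rev (hx : IsVanishingSolution T A B C x) :
    IsVanishingSolution T (rev A) (fun t => B (-t)) (rev C) (rev x) where
  contDiff := (hx.contDiff.comp contDiff_neg).neg
  periodic := periodic_rev hx.periodic
  mul_deriv t := by
    simp only [deriv_rev, rev]
    linear_combination -hx.mul_deriv (-t)
  exists_zero := by
    obtain ⟨t, ht⟩ := hx.exists_zero
    exact ⟨-t, by simp [rev, ht]⟩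

protected lemma neg (hx : IsVanishingSolution T A B C x) :
    IsVanishingSolution T A (fun t => -B t) C (fun t => -x t) where
  contDiff := hx.contDiff.neg
  periodic t := congrArg Neg.neg (hx.periodic t)
  mul_deriv t := by
    rw [deriv.fun_neg]
    linear_combination hx.mul_deriv t
  exists_zero := hx.exists_zero.imp fun t ht => by rw [ht, neg_zero]

protected lemma hasDerivAt (hx : IsVanishingSolution T A B C x) (t : ℝ) :
    HasDerivAt x (deriv x t) t :=
  (hx.contDiff.differentiable one_ne_zero t).hasDerivAt

lemma ne_zero (hx : IsVanishingSolution T A B C x) (ht : A t ≠ 0) : x t ≠ 0 := fun h0 => ht <| by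
  simpa [h0] using (hx.mul_deriv t).symm

-- The line of slope `m` through `(z, 0)` is a barrier that keeps `x` positive up to `z + T`.
lemma nonpos_of_zero (h : Admissible T A B C m c) (hx : IsVanishingSolution T A B C x)
    (hz : A z = 0) : x z ≤ 0 := by
  by_contra! hpos
  have hbarrier : ∀ ⦃t⦄, t ∈ Icc z (z + T) → m * (t - z) ≤ x t := by
    refine image_le_of_deriv_right_lt_deriv_boundary (f' := fun _ => m) (by fun_prop)
      (fun t _ => ?_) (by simpa using hpos.le) hx.hasDerivAt fun t ht heq => ?_
    · simpa using (((hasDerivAt_id t).sub_const z).const_mul m).hasDerivWithinAt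
    · obtain rfl | hzt := ht.1.eq_or_lt
      · simp [← heq] at hpos
      have hτ := sub_pos.2 hzt
      refine lt_of_mul_lt_mul_left ?_ (heq ▸ mul_pos h.m_pos hτ).le
      have hA := h.lt_sub t hzt
      have hC : -(c * (m ^ 2 * (t - z) * T)) ≤ C t * (m ^ 2 * (t - z) * (t - z)) := by
        rw [← neg_mul]
        have := h.c_nonneg
        calc -c * (m ^ 2 * (t - z) * T) ≤ -c * (m ^ 2 * (t - z) * (t - z)) :=
              mul_le_mul_of_nonpos_left (by gcongr; linarith [ht.2]) (by linarith)
          _ ≤ _ := by gcongr; exact h.neg_c_le t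
      rw [hx.mul_deriv, ← heq]
      linarith
  obtain ⟨s, hs⟩ := hx.exists_zero
  obtain ⟨t, ht, hts⟩ := hx.periodic.exists_mem_Ioc h.T_pos s z
  have := hbarrier (Ioc_subset_Icc_self ht)
  rw [← hts, hs] at this
  linarith [mul_pos h.m_pos (sub_pos.2 ht.1)]

lemma eq_zero_of_zero (h : Admissible T A B C m c) (hx : IsVanishingSolution T A B C x)
    (hz : A z = 0) : x z = 0 := by
  refine le_antisymm (nonpos_of_zero h hx hz) ?_
  have := nonpos_of_zero (z := -z) h.rev hx.rev (by simp [rev, hz])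
  simpa [rev] using this

lemma hasDerivAt_negPart_sq (hx : IsVanishingSolution T A B C x) (t : ℝ) :
    HasDerivAt (fun s => max (-x s) 0 ^ 2) (2 * max (-x t) 0 * -deriv x t) t :=
  HasDerivAt.comp (h₂ := fun y => max y 0 ^ 2) t (hasDerivAt_max_zero_sq (-x t))
    (hx.hasDerivAt t).fun_neg

lemma pos_of_neg (h : Admissible T A B C m c) (hx : IsVanishingSolution T A B C x)
    (ht : A t < 0) : 0 < x t := by
  obtain ⟨z, hzt, hz, -⟩ := h.exists_zero_le t
  refine (hx.ne_zero ht.ne).symm.lt_of_le ?_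
  have hsq := nonpos_of_neg_of_deriv_le_mul (K := 2 * c) h.continuous_A hx.hasDerivAt_negPart_sq
    (fun s hs => by simp [hx.eq_zero_of_zero h hs]) (fun s hs hpos => ?_) hz hzt ht
  · have := pow_eq_zero_iff two_ne_zero |>.1 (hsq.antisymm (sq_nonneg _))
    exact neg_nonpos.1 (max_eq_right_iff.1 this)
  · have hneg : x s < 0 := by
      by_contra! hle
      simp [max_eq_right (neg_nonpos.2 hle)] at hpos
    rw [max_eq_left (neg_pos.2 hneg).le]
    linarith [hx.mul_deriv s, mul_neg_of_pos_of_neg (h.B_pos s) hneg,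
      mul_le_mul_of_nonneg_right (h.C_le s) (sq_nonneg (x s))]

lemma neg_of_pos (h : Admissible T A B C m c) (hx : IsVanishingSolution T A B C x)
    (ht : 0 < A t) : x t < 0 := by
  have := hx.rev.pos_of_neg (t := -t) h.rev (by simpa [rev] using ht)
  simpa [rev] using this

lemma isNegPartSq (h : Admissible T A B C m c) (hx : IsVanishingSolution T A B C x) :
    IsNegPartSq A B C fun t => max (-x t) 0 ^ 2 where
  nonneg t := sq_nonneg _
  hasDerivAt t := by
    refine (hx.hasDerivAt_negPart_sq t).congr_deriv ?_
    rw [Real.sqrt_sq (le_max_right _ _)]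
    rcases le_or_gt (A t) 0 with ht | ht
    · have hnonneg : 0 ≤ x t := ht.eq_or_lt.elim (fun ht => (hx.eq_zero_of_zero h ht).ge)
        fun ht => (hx.pos_of_neg h ht).le
      simp [max_eq_right (neg_nonpos.2 hnonneg), max_eq_right ht]
    · rw [max_eq_left (neg_pos.2 (hx.neg_of_pos h ht)).le, max_eq_left ht.le]
      linear_combination 2 * hx.mul_deriv t
  eq_zero t ht := by simp [hx.eq_zero_of_zero h ht]

lemma negPart_eq (h : Admissible T A B C m c) (hx : IsVanishingSolution T A B C x)
    (hy : IsVanishingSolution T A B C y) (t : ℝ) : max (-x t) 0 = max (-y t) 0 :=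
  (sq_eq_sq₀ (le_max_right _ _) (le_max_right _ _)).1
    (congrFun ((hx.isNegPartSq h).eq h (hy.isNegPartSq h)) t)

protected theorem eq (h : Admissible T A B C m c) (hx : IsVanishingSolution T A B C x)
    (hy : IsVanishingSolution T A B C y) : x = y := by
  ext t
  have hneg := hx.negPart_eq h hy t
  have hpos := hx.rev.negPart_eq h.rev hy.rev (-t)
  simp only [rev, neg_neg] at hpos
  calc x t = max (x t) 0 - max (-x t) 0 := (posPart_sub_negPart (x t)).symm
    _ = max (y t) 0 - max (-y t) 0 := by rw [hneg, hpos]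
    _ = y t := posPart_sub_negPart (y t)

end IsVanishingSolution

section ExistsUnique

variable {A B C f : ℝ → ℝ} {T : ℝ}

lemma sInf_image_Icc_le (hf : Continuous f) (hper : Function.Periodic f T) (hT : 0 < T) (t : ℝ) :
    sInf (f '' Icc 0 T) ≤ f t := by
  refine csInf_le (isCompact_Icc.image hf).bddBelow ?_
  rw [← zero_add T, hper.image_Icc hT]
  exact mem_range_self t

lemma le_sSup_image_Icc (hf : Continuous f) (hper : Function.Periodic f T) (hT : 0 < T) (t : ℝ) :
    f t ≤ sSup (f '' Icc 0 T) := by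
  refine le_csSup (isCompact_Icc.image hf).bddAbove ?_
  rw [← zero_add T, hper.image_Icc hT]
  exact mem_range_self t

lemma forall_pos_or_forall_neg (hB : Continuous B) (hne : ∀ t, B t ≠ 0) :
    (∀ t, 0 < B t) ∨ ∀ t, B t < 0 := by
  by_contra! ⟨⟨s, hs⟩, ⟨t, ht⟩⟩
  obtain ⟨r, hr⟩ := mem_range_of_exists_le_of_exists_ge hB ⟨s, hs⟩ ⟨t, ht⟩
  exact hne r hr

lemma periodic_deriv (hA : Function.Periodic A T) : Function.Periodic (deriv A) T := fun t => by
  rw [← deriv_comp_add_const, hA.funext]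

theorem exists_admissible {a b c : ℝ} (hT : 0 < T) (hA : ContDiff ℝ 1 A) (hB : Continuous B)
    (hC : Continuous C) (hAper : Function.Periodic A T) (hBper : Function.Periodic B T)
    (hCper : Function.Periodic C T) (hzero : ∃ t, A t = 0)
    (hsimple : ∀ t, A t = 0 → deriv A t ≠ 0) (ha : ∀ t, a ≤ deriv A t) (hb_pos : 0 < b)
    (hb : ∀ t, b ≤ B t) (hc : ∀ t, |C t| ≤ c) (hcond : -4 * a * (1 + T * c) < b ^ 2) :
    ∃ m, Admissible T A B C m c := by
  have hL : 0 < 1 + c * T := by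
    have := (abs_nonneg _).trans (hc 0)
    positivity
  refine ⟨b / (2 * (1 + c * T)), hT, hA, hB, hC, hAper, hBper, hCper, hzero, hsimple,
    by positivity, hc, fun s t => ?_⟩
  calc (b / (2 * (1 + c * T))) ^ 2 * (1 + c * T) - deriv A s
      ≤ (b / (2 * (1 + c * T))) ^ 2 * (1 + c * T) - a := by gcongr; exact ha s
    _ = b ^ 2 / (4 * (1 + c * T)) - a := by field_simp; ring
    _ < b ^ 2 / (4 * (1 + c * T)) + b ^ 2 / (4 * (1 + c * T)) := by
      have : -a < b ^ 2 / (4 * (1 + c * T)) := (lt_div_iff₀ (by positivity)).2 (by linarith)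
      linarith
    _ = b / (2 * (1 + c * T)) * b := by field_simp; ring
    _ ≤ b / (2 * (1 + c * T)) * B t := by gcongr; exact hb t

theorem Admissible.existsUnique_isVanishingSolution {m c : ℝ} (h : Admissible T A B C m c) :
    ∃! x, IsVanishingSolution T A B C x :=
  existsUnique_of_exists_of_unique (exists_isVanishingSolution h) fun _ _ hx hy => hx.eq h hy

lemma existsUnique_isVanishingSolution_neg (h : ∃! x, IsVanishingSolution T A (fun t => -B t) C x) :
    ∃! x, IsVanishingSolution T A B C x := by
  obtain ⟨x, hx, huniq⟩ := h
  refine ⟨fun t => -x t, by simpa using hx.neg, fun y hy => ?_⟩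
  rw [← huniq _ hy.neg]
  simp

lemma pos_of_lt_sq {a b c : ℝ} (hT : 0 < T) (hA : Continuous A) (hper : Function.Periodic A T)
    (ha : ∀ t, a ≤ deriv A t) (hb : 0 ≤ b) (hc : 0 ≤ c) (hcond : -4 * a * (1 + T * c) < b ^ 2) :
    0 < b := by
  obtain ⟨s, hs⟩ := exists_deriv_eq_zero_of_periodic hA hper hT
  have := mul_nonneg (neg_nonneg.2 (hs ▸ ha s)) (by positivity : 0 ≤ 1 + T * c)
  exact hb.lt_of_ne' (pow_ne_zero_iff two_ne_zero |>.1 (by linarith : 0 < b ^ 2).ne')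

theorem existsUnique_isVanishingSolution {a b c : ℝ} (hT : 0 < T) (hA : ContDiff ℝ 1 A)
    (hB : Continuous B) (hC : Continuous C) (hAper : Function.Periodic A T)
    (hBper : Function.Periodic B T) (hCper : Function.Periodic C T) (hzero : ∃ t, A t = 0)
    (hsimple : ∀ t, A t = 0 → deriv A t ≠ 0) (ha : ∀ t, a ≤ deriv A t) (hb_nonneg : 0 ≤ b)
    (hb : ∀ t, b ≤ |B t|) (hc : ∀ t, |C t| ≤ c) (hcond : -4 * a * (1 + T * c) < b ^ 2) :
    ∃! x, IsVanishingSolution T A B C x := by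
  have hb_pos :=
    pos_of_lt_sq hT hA.continuous hAper ha hb_nonneg ((abs_nonneg _).trans (hc 0)) hcond
  rcases forall_pos_or_forall_neg hB fun t => abs_pos.1 (hb_pos.trans_le (hb t)) with hpos | hneg
  · obtain ⟨m, h⟩ := exists_admissible hT hA hB hC hAper hBper hCper hzero hsimple ha hb_pos
      (fun t => (hb t).trans_eq (abs_of_pos (hpos t))) hc hcond
    exact h.existsUnique_isVanishingSolution
  · obtain ⟨m, h⟩ := exists_admissible hT hA hB.neg hC hAper
      (fun t => congrArg Neg.neg (hBper t)) hCper hzero hsimple ha hb_pos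
      (fun t => (hb t).trans_eq (abs_of_neg (hneg t))) hc hcond
    exact existsUnique_isVanishingSolution_neg h.existsUnique_isVanishingSolution

lemma exists_ne_zero_of_simple_zero (hA : ContDiff ℝ 1 A) (hzero : ∃ t, A t = 0)
    (hsimple : ∀ t, A t = 0 → deriv A t ≠ 0) : ∃ t, A t ≠ 0 := by
  obtain ⟨z, hz⟩ := hzero
  exact ((hA.differentiable one_ne_zero z).hasDerivAt.eventually_ne (hsimple z hz)).exists

end ExistsUnique

end AbelEquation

open AbelEquation in
theorem unique_nonconstant_sign_solution_general
    (T : ℝ) (hT : 0 < T) (A B C : ℝ → ℝ)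
    (hA : ContDiff ℝ 1 A) (hB : Continuous B) (hC : Continuous C)
    (hAper : Function.Periodic A T) (hBper : Function.Periodic B T)
    (hCper : Function.Periodic C T)
    (hzero : ∃ t, A t = 0)
    (hcond : (sInf ((fun t => |B t|) '' Icc (0 : ℝ) T)) ^ 2 >
      -4 * sInf ((fun t => deriv A t) '' Icc (0 : ℝ) T) *
        (1 + T * sSup ((fun t => |C t|) '' Icc (0 : ℝ) T)))
    (hsimple : ∀ t : ℝ, A t = 0 → deriv A t ≠ 0) :
    ∃! x : ℝ → ℝ, ContDiff ℝ 1 x ∧ Function.Periodic x T ∧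
      (∀ t : ℝ, x t * deriv x t = A t + B t * x t + C t * x t ^ 2) ∧
      (∃ t₀ : ℝ, x t₀ = 0) ∧ (∃ t : ℝ, x t ≠ 0) := by
  have ha := sInf_image_Icc_le (hA.continuous_deriv le_rfl) (periodic_deriv hAper) hT
  have hb := sInf_image_Icc_le hB.abs (fun t => congrArg abs (hBper t)) hT
  have hc := le_sSup_image_Icc hC.abs (fun t => congrArg abs (hCper t)) hT
  obtain ⟨s, hs⟩ := exists_ne_zero_of_simple_zero hA hzero hsimple
  have hexists : ∃! x, IsVanishingSolution T A B C x :=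
    existsUnique_isVanishingSolution hT hA hB hC hAper hBper hCper hzero hsimple ha
      (Real.sInf_nonneg (forall_mem_image.2 fun t _ => abs_nonneg (B t))) hb hc hcond
  refine (existsUnique_congr fun x => ?_).1 hexists
  exact ⟨fun hx => ⟨hx.contDiff, hx.periodic, hx.mul_deriv, hx.exists_zero, s, hx.ne_zero hs⟩,
    fun ⟨hdiff, hper, heq, h0, _⟩ => ⟨hdiff, hper, heq, h0⟩⟩

/-- under (H), if all zeros of A are simple then (N) has exactly one C¹,
T-periodic solution with nonconstant sign. -/
theorem unique_nonconstant_sign_solution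
    (T : ℝ) (hT : 0 < T) (A B C : ℝ → ℝ)
    (hA : ContDiff ℝ 1 A) (hB : ContDiff ℝ 1 B) (hC : ContDiff ℝ 1 C)
    (hAper : Function.Periodic A T) (hBper : Function.Periodic B T)
    (hCper : Function.Periodic C T)
    (hzero : ∃ t ∈ Icc (0 : ℝ) T, A t = 0)
    (hcond : (sInf ((fun t => |B t|) '' Icc (0 : ℝ) T)) ^ 2 >
      -4 * sInf ((fun t => deriv A t) '' Icc (0 : ℝ) T) *
        (1 + T * sSup ((fun t => |C t|) '' Icc (0 : ℝ) T)))
    (hsimple : ∀ t : ℝ, A t = 0 → deriv A t ≠ 0) :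
    ∃! x : ℝ → ℝ, ContDiff ℝ 1 x ∧ Function.Periodic x T ∧
      (∀ t : ℝ, x t * deriv x t = A t + B t * x t + C t * x t ^ 2) ∧
      (∃ t₀ : ℝ, x t₀ = 0) ∧ (∃ t : ℝ, x t ≠ 0) := by
  exact unique_nonconstant_sign_solution_general T hT A B C hA hB.continuous hC.continuous hAper
    hBper hCper (hzero.imp fun _ => And.right) hcond hsimple
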